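/- Let 𝓕, 𝓖, 𝓗 be co-filters on sets S, T, U respectively. Let Φ ⊆ S × T with Φ ∈ hom(𝓕,𝓖) and Ψ ⊆ T × U with Ψ ∈ hom(𝓖,𝓗). Then the composite relation Ψ ∘ Φ := {(s, u) ∈ S × U : ∃ t ∈ T, (s, t) ∈ Φ and (t, u) ∈ Ψ} belongs to hom(𝓕,𝓗). -/

import Mathlib

/-- A co-filter on a set `S`: a collection of subsets closed under passing to subsets
and under binary unions. -/
def IsCofilter {S : Type*} (F : Set (Set S)) : Prop :=
  (∀ A ∈ F, ∀ B : Set S, B ⊆ A → B ∈ F) ∧ ∀ A ∈ F, ∀ B ∈ F, A ∪ B ∈ F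

/-- The co-filter `hom(𝓕, 𝓖)` on `S × T`: subsets `U` such that `U ∩ (R × {t})` is finite
for all `t ∈ T`, `R ∈ 𝓕`, and such that `H_R(U) = {t | U ∩ (R × {t}) ≠ ∅} ∈ 𝓖` for `R ∈ 𝓕`. -/
def cofilterHom {S T : Type*} (F : Set (Set S)) (G : Set (Set T)) :
    Set (Set (S × T)) :=
  {U | (∀ t : T, ∀ R ∈ F, (U ∩ R ×ˢ ({t} : Set T)).Finite) ∧
       ∀ R ∈ F, {t : T | (U ∩ R ×ˢ ({t} : Set T)).Nonempty} ∈ G}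

/-!
In the language of relations, `H_R(Φ)` is the image `Φ.image R`, and images are functorial:
`H_R(Ψ ∘ Φ) = H_{H_R(Φ)}(Ψ)`, which gives the support condition at once. For finiteness, a point of
`R` is related to `u` by `Ψ ∘ Φ` through some `t ∈ H_R(Φ)` with `(t, u) ∈ Ψ`: there are finitely
many such `t` because `H_R(Φ) ∈ 𝓖`, and each is reached from finitely many points of `R` because
`R ∈ 𝓕`.
-/

section

variable {S T U : Type*} {F : Set (Set S)} {G : Set (Set T)} {H : Set (Set U)}
  {Φ : SetRel S T} {Ψ : SetRel T U} {R : Set S} {t : T}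

theorem nonempty_inter_prod_singleton_iff :
    (Φ ∩ R ×ˢ ({t} : Set T)).Nonempty ↔ t ∈ Φ.image R := by
  constructor
  · rintro ⟨⟨s, _⟩, hst, hs, rfl⟩
    exact ⟨s, hs, hst⟩
  · rintro ⟨s, hs, hst⟩
    exact ⟨(s, t), hst, hs, rfl⟩

theorem inter_prod_singleton_eq_image (Φ : SetRel S T) (R : Set S) (t : T) :
    Φ ∩ R ×ˢ ({t} : Set T) = (fun s => (s, t)) '' (R ∩ Φ.preimage {t}) := by
  ext ⟨s, t'⟩
  constructor
  · rintro ⟨hst, hs, rfl⟩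
    exact ⟨s, ⟨hs, t', rfl, hst⟩, rfl⟩
  · rintro ⟨_, ⟨hs, _, rfl, hst⟩, ⟨⟩⟩
    exact ⟨hst, hs, rfl⟩

theorem finite_inter_prod_singleton_iff :
    (Φ ∩ R ×ˢ ({t} : Set T)).Finite ↔ (R ∩ Φ.preimage {t}).Finite := by
  rw [inter_prod_singleton_eq_image, Set.finite_image_iff (Prod.mk_left_injective t).injOn]

theorem mem_cofilterHom_iff :
    Φ ∈ cofilterHom F G ↔
      (∀ t, ∀ R ∈ F, (R ∩ Φ.preimage {t}).Finite) ∧ ∀ R ∈ F, Φ.image R ∈ G := by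
  simp only [cofilterHom, Set.mem_ofPred_eq, finite_inter_prod_singleton_iff,
    nonempty_inter_prod_singleton_iff, Set.ofPred_mem_eq]

theorem inter_preimage_comp_eq_biUnion (Φ : SetRel S T) (Ψ : SetRel T U)
    (R : Set S) (V : Set U) :
    R ∩ (Φ.comp Ψ).preimage V =
      ⋃ t ∈ Φ.image R ∩ Ψ.preimage V, R ∩ Φ.preimage {t} := by
  ext s
  simp only [Set.mem_iUnion]
  constructor
  · rintro ⟨hs, u, hu, t, hst, htu⟩
    exact ⟨t, ⟨⟨s, hs, hst⟩, u, hu, htu⟩, hs, t, rfl, hst⟩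
  · rintro ⟨t, ⟨-, u, hu, htu⟩, hs, _, rfl, hst⟩
    exact ⟨hs, u, hu, _, hst, htu⟩

theorem cofilterHom_comp_general (hΦ : Φ ∈ cofilterHom F G) (hΨ : Ψ ∈ cofilterHom G H) :
    Φ.comp Ψ ∈ cofilterHom F H := by
  rw [mem_cofilterHom_iff] at hΦ hΨ ⊢
  obtain ⟨hΦ_finite, hΦ_image⟩ := hΦ
  obtain ⟨hΨ_finite, hΨ_image⟩ := hΨ
  refine ⟨fun u R hR => ?_, fun R hR => ?_⟩
  · rw [inter_preimage_comp_eq_biUnion]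
    exact (hΨ_finite u _ (hΦ_image R hR)).biUnion fun t _ => hΦ_finite t R hR
  · rw [SetRel.image_comp]
    exact hΨ_image _ (hΦ_image R hR)

end

/-- Composition of relations supported on `hom`-co-filters lands in the `hom`-co-filter:
if `Φ ∈ hom(𝓕, 𝓖)` and `Ψ ∈ hom(𝓖, 𝓗)` then `Ψ ∘ Φ ∈ hom(𝓕, 𝓗)`. -/
theorem cofilterHom_comp {S T U : Type*}
    (F : Set (Set S)) (G : Set (Set T)) (H : Set (Set U))
    (hF : IsCofilter F) (hG : IsCofilter G) (hH : IsCofilter H)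
    (Φ : Set (S × T)) (hΦ : Φ ∈ cofilterHom F G)
    (Ψ : Set (T × U)) (hΨ : Ψ ∈ cofilterHom G H) :
    {su : S × U | ∃ t : T, (su.1, t) ∈ Φ ∧ (t, su.2) ∈ Ψ} ∈ cofilterHom F H :=
  cofilterHom_comp_general hΦ hΨ
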